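/- arXiv:1010.3308 — 2 statements merged into one kernel-verified Lean document; each statement's English description precedes it below -/
import Mathlib

section
/- Let I = [0,1] × [0,1] be the unit square with coordinates (u,v). Let A, B ⊆ I be closed sets such that: every continuous curve γ : [0,1] → I with first coordinate of γ(0) equal to 0 and first coordinate of γ(1) equal to 1 intersects A; and every continuous curve γ : [0,1] → I with second coordinate of γ(0) equal to 0 and second coordinate of γ(1) equal to 1 intersects B. Then A ∩ B ≠ ∅. -/
/-- The unit square `I = [0,1] × [0,1]` in `ℝ²`. -/
def unitSquare : Set (ℝ × ℝ) := Set.Icc (0:ℝ) 1 ×ˢ Set.Icc (0:ℝ) 1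

/-!
The square matters only as a simply connected space `X` with four connected sides. If `A` and `B`
were disjoint, Urysohn's lemma would give a continuous `φ : X → [0, 1]` that is `0` on `A` and `1`
on `B`. Since `A` cuts the left side off the right one, the sign of `φ` can be switched across `A`
to obtain a continuous `f = ±φ`, nonnegative on the left and nonpositive on the right; likewise
`g = ±(1 - φ)` for `B`, bottom and top. Having no common zero, `f` and `g` make `f + g * I` a
nonvanishing function with a continuous argument. But the signs of `f` and `g` force that argument
to advance by a quarter turn along each side, hence by a full turn around the boundary, which is
absurd.
-/

open Set Real

lemma mem_Icc_zero_pi_of_sin_nonneg {K : Set ℝ} [hK : K.OrdConnected]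
    (hsin : ∀ t ∈ K, 0 ≤ sin t) {x y : ℝ} (hx : x ∈ K) (hy : y ∈ K) (hxI : x ∈ Icc 0 π) :
    y ∈ Icc 0 π := by
  have hpi := pi_pos
  constructor
  · by_contra! hlt
    have hz : max y (-(π / 2)) ∈ K :=
      hK.out hy hx ⟨le_max_left .., max_le (by linarith [hxI.1]) (by linarith [hxI.1])⟩
    refine (hsin _ hz).not_gt (sin_neg_of_neg_of_neg_pi_lt (max_lt hlt (by linarith)) ?_)
    exact lt_max_of_lt_right (by linarith)
  · by_contra! hlt
    have hz : min y (π + π / 2) ∈ K :=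
      hK.out hx hy ⟨le_min (by linarith [hxI.2]) (by linarith [hxI.2]), min_le_left ..⟩
    have hpos : 0 < sin (min y (π + π / 2) - π) :=
      sin_pos_of_pos_of_lt_pi (sub_pos.2 (lt_min hlt (by linarith)))
        (by linarith [min_le_right y (π + π / 2)])
    rw [sin_sub_pi] at hpos
    linarith [hsin _ hz]

lemma mem_next_quadrant {X : Type*} [TopologicalSpace X] {s : Set X} (hs : IsPreconnected s)
    {θ : X → ℝ} (hθ : ContinuousOn θ s) {c : ℝ} (hsin : ∀ z ∈ s, 0 ≤ sin (θ z - c)) {x y : X}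
    (hx : x ∈ s) (hy : y ∈ s) (hxc : θ x ∈ Icc c (c + π / 2)) (hcos : cos (θ y - c) ≤ 0) :
    θ y ∈ Icc (c + π / 2) (c + π / 2 + π / 2) := by
  have hpi := pi_pos
  have hK : ((θ · - c) '' s).OrdConnected :=
    (hs.image _ (hθ.sub continuousOn_const)).ordConnected
  have hyI : θ y - c ∈ Icc 0 π :=
    mem_Icc_zero_pi_of_sin_nonneg (forall_mem_image.2 hsin) (mem_image_of_mem _ hx)
      (mem_image_of_mem _ hy) ⟨by linarith [hxc.1], by linarith [hxc.2]⟩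
  have hquarter : π / 2 ≤ θ y - c := by
    by_contra! hlt
    exact hcos.not_gt (cos_pos_of_mem_Ioo ⟨by linarith [hyI.1], hlt⟩)
  exact ⟨by linarith, by linarith [hyI.2]⟩

lemma exists_continuous_arg {X : Type*} [TopologicalSpace X] [SimplyConnectedSpace X]
    [LocallyPathConnectedSpace X] (F : C(X, ℂ)) (hF : ∀ x, F x ≠ 0) (x₀ : X) :
    ∃ θ : C(X, ℝ), θ x₀ = (F x₀).arg ∧ ∀ x, F x = ‖F x‖ * Complex.exp (θ x * Complex.I) := by
  obtain ⟨L, ⟨hL₀, hL⟩, -⟩ := Complex.isCoveringMapOn_exp.existsUnique_continuousMap_lifts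
    F (Complex.exp_log (hF x₀)) hF
  refine ⟨⟨fun x ↦ (L x).im, by fun_prop⟩, by simp [hL₀, Complex.log_im], fun x ↦ ?_⟩
  have hLx : Complex.exp (L x) = F x := congrFun hL x
  rw [← hLx, Complex.norm_exp, Complex.ofReal_exp, ← Complex.exp_add]
  exact congrArg Complex.exp (Complex.re_add_im _).symm

/-- Four preconnected sides in cyclic order, consecutive ones sharing a corner: all that the
argument uses about the sides of a square. -/
structure IsQuadrilateral {X : Type*} [TopologicalSpace X] (left bottom right top : Set X) :
    Prop where
  isPreconnected_left : IsPreconnected left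
  isPreconnected_bottom : IsPreconnected bottom
  isPreconnected_right : IsPreconnected right
  isPreconnected_top : IsPreconnected top
  left_inter_bottom : (left ∩ bottom).Nonempty
  bottom_inter_right : (bottom ∩ right).Nonempty
  right_inter_top : (right ∩ top).Nonempty
  top_inter_left : (top ∩ left).Nonempty

/-- `A` separates `S` from `T` in the sense of paths: every path from a point of `S` to a point
of `T` meets `A`. -/
def PathSeparates {X : Type*} [TopologicalSpace X] (A S T : Set X) : Prop :=
  ∀ x ∈ S, ∀ y ∈ T, ∀ γ : Path x y, ∃ t, γ t ∈ A

section General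

variable {X : Type*} [TopologicalSpace X]

namespace IsQuadrilateral

variable {left bottom right top : Set X}

lemma corner_angle_notMem_Icc (hQ : IsQuadrilateral left bottom right top) {θ : X → ℝ}
    (hθ : Continuous θ) (hleft : ∀ x ∈ left, 0 ≤ cos (θ x)) (hright : ∀ x ∈ right, cos (θ x) ≤ 0)
    (hbottom : ∀ x ∈ bottom, 0 ≤ sin (θ x)) (htop : ∀ x ∈ top, sin (θ x) ≤ 0) {p : X}
    (hp : p ∈ left ∩ bottom) :
    θ p ∉ Icc 0 (π / 2) := by
  intro hp₀
  obtain ⟨q, hqb, hqr⟩ := hQ.bottom_inter_right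
  obtain ⟨r, hrr, hrt⟩ := hQ.right_inter_top
  obtain ⟨s, hst, hsl⟩ := hQ.top_inter_left
  have hq : θ q ∈ Icc (π / 2) (π / 2 + π / 2) := by
    simpa only [zero_add] using mem_next_quadrant hQ.isPreconnected_bottom hθ.continuousOn
      (c := 0) (by simpa only [sub_zero] using hbottom) hp.2 hqb
      (by simpa only [zero_add] using hp₀) (by simpa only [sub_zero] using hright q hqr)
  have hr : θ r ∈ Icc π (π + π / 2) := by
    simpa only [add_halves] using mem_next_quadrant hQ.isPreconnected_right hθ.continuousOn
      (by simpa only [sin_sub_pi_div_two, neg_nonneg] using hright) hqr hrr hq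
      (by simpa only [cos_sub_pi_div_two] using htop r hrt)
  have hs : θ s ∈ Icc (π + π / 2) (π + π / 2 + π / 2) :=
    mem_next_quadrant hQ.isPreconnected_top hθ.continuousOn
      (by simpa only [sin_sub_pi, neg_nonneg] using htop) hrt hst hr
      (by simpa only [cos_sub_pi, neg_nonpos] using hleft s hsl)
  have hp₁ : π + π / 2 + π / 2 ≤ θ p :=
    (mem_next_quadrant hQ.isPreconnected_left hθ.continuousOn
      (by simpa only [← sub_sub, sin_sub_pi_div_two, cos_sub_pi, neg_neg] using hleft) hsl hp.1 hs
      (by simpa only [← sub_sub, cos_sub_pi_div_two, sin_sub_pi, neg_nonpos]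
        using hbottom p hp.2)).1
  linarith [hp₀.2, pi_pos]

/-- The Poincaré–Miranda theorem in dimension two. -/
theorem exists_common_zero [SimplyConnectedSpace X] [LocallyPathConnectedSpace X]
    (hQ : IsQuadrilateral left bottom right top) {f g : X → ℝ}
    (hf : Continuous f) (hg : Continuous g)
    (hleft : ∀ x ∈ left, 0 ≤ f x) (hright : ∀ x ∈ right, f x ≤ 0)
    (hbottom : ∀ x ∈ bottom, 0 ≤ g x) (htop : ∀ x ∈ top, g x ≤ 0) :
    ∃ x, f x = 0 ∧ g x = 0 := by
  by_contra! hne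
  obtain ⟨p, hp⟩ := hQ.left_inter_bottom
  let F : C(X, ℂ) := ⟨fun x ↦ ⟨f x, g x⟩, by simp only [Complex.mk_eq_add_mul_I]; fun_prop⟩
  have hF (x : X) : F x ≠ 0 := fun h ↦ hne x (congrArg Complex.re h) (congrArg Complex.im h)
  obtain ⟨θ, hθp, hθ⟩ := exists_continuous_arg F hF p
  have hcos (x : X) : f x = ‖F x‖ * cos (θ x) :=
    (congrArg Complex.re (hθ x)).trans
      (by rw [Complex.re_ofReal_mul, Complex.exp_ofReal_mul_I_re])
  have hsin (x : X) : g x = ‖F x‖ * sin (θ x) :=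
    (congrArg Complex.im (hθ x)).trans
      (by rw [Complex.im_ofReal_mul, Complex.exp_ofReal_mul_I_im])
  have hnorm (x : X) : 0 < ‖F x‖ := norm_pos_iff.2 (hF x)
  have hcos_left (x) (hx : x ∈ left) : 0 ≤ cos (θ x) :=
    nonneg_of_mul_nonneg_right (hcos x ▸ hleft x hx) (hnorm x)
  have hcos_right (x) (hx : x ∈ right) : cos (θ x) ≤ 0 :=
    nonpos_of_mul_nonpos_right (hcos x ▸ hright x hx) (hnorm x)
  have hsin_bottom (x) (hx : x ∈ bottom) : 0 ≤ sin (θ x) :=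
    nonneg_of_mul_nonneg_right (hsin x ▸ hbottom x hx) (hnorm x)
  have hsin_top (x) (hx : x ∈ top) : sin (θ x) ≤ 0 :=
    nonpos_of_mul_nonpos_right (hsin x ▸ htop x hx) (hnorm x)
  refine hQ.corner_angle_notMem_Icc θ.continuous hcos_left hcos_right hsin_bottom hsin_top hp ?_
  rw [hθp]
  exact ⟨Complex.arg_nonneg_iff.2 (hbottom p hp.2),
    (le_abs_self _).trans (Complex.abs_arg_le_pi_div_two_iff.2 (hleft p hp.1))⟩

end IsQuadrilateral

lemma exists_continuous_abs_eq_of_pathSeparates [LocallyPathConnectedSpace X] {A S T : Set X}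
    (hA : IsClosed A) (hsep : PathSeparates A S T) {φ : X → ℝ} (hφ : Continuous φ)
    (hφ₀ : ∀ x, 0 ≤ φ x) (hφA : ∀ x ∈ A, φ x = 0) :
    ∃ f : X → ℝ, Continuous f ∧ (∀ x, |f x| = φ x) ∧ (∀ x ∈ S, 0 ≤ f x) ∧ ∀ x ∈ T, f x ≤ 0 := by
  classical
  let U : Set X := {x | ∃ s ∈ S, JoinedIn Aᶜ s x}
  have hfrontier : frontier U ⊆ A := by
    intro x hx
    by_contra hxA
    have hnhds : pathComponentIn Aᶜ x ∈ nhds x :=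
      (hA.isOpen_compl.pathComponentIn x).mem_nhds (mem_pathComponentIn_self hxA)
    rw [frontier_eq_closure_inter_closure] at hx
    obtain ⟨y, hxy, s, hs, hsy⟩ := mem_closure_iff_nhds.1 hx.1 _ hnhds
    obtain ⟨z, hxz, hzU⟩ := mem_closure_iff_nhds.1 hx.2 _ hnhds
    exact hzU ⟨s, hs, hsy.trans (hxy.symm.trans hxz)⟩
  refine ⟨fun x ↦ if x ∈ U then φ x else -φ x, ?_, fun x ↦ ?_, fun x hx ↦ ?_, fun x hx ↦ ?_⟩
  · exact hφ.if (fun x hx ↦ by simp [hφA x (hfrontier hx)]) hφ.neg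
  · by_cases hxU : x ∈ U <;> simp [hxU, abs_of_nonneg (hφ₀ x)]
  · by_cases hxA : x ∈ A
    · simp [hφA x hxA]
    · have hxU : x ∈ U := ⟨x, hx, JoinedIn.refl hxA⟩
      simpa [hxU] using hφ₀ x
  · have hxU : x ∉ U := by
      rintro ⟨s, hs, γ, hγ⟩
      obtain ⟨t, ht⟩ := hsep s hs x hx γ
      exact hγ t ht
    simpa [hxU] using hφ₀ x

theorem square_crossing_sets_intersect_general [SimplyConnectedSpace X]
    [LocallyPathConnectedSpace X] [NormalSpace X]
    {left bottom right top A B : Set X} (hQ : IsQuadrilateral left bottom right top)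
    (hA : IsClosed A) (hB : IsClosed B) (hAsep : PathSeparates A left right)
    (hBsep : PathSeparates B bottom top) :
    (A ∩ B).Nonempty := by
  rw [← not_disjoint_iff_nonempty_inter]
  intro hAB
  obtain ⟨φ, hφA, hφB, hφ⟩ := exists_continuous_zero_one_of_isClosed hA hB hAB
  obtain ⟨f, hf, hfφ, hleft, hright⟩ := exists_continuous_abs_eq_of_pathSeparates hA hAsep
    φ.continuous (fun x ↦ (hφ x).1) hφA
  obtain ⟨g, hg, hgφ, hbottom, htop⟩ := exists_continuous_abs_eq_of_pathSeparates hB hBsep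
    (φ := fun x ↦ 1 - φ x) (by fun_prop) (fun x ↦ sub_nonneg.2 (hφ x).2)
    (fun x hx ↦ sub_eq_zero.2 (hφB hx).symm)
  obtain ⟨x, hfx, hgx⟩ := hQ.exists_common_zero hf hg hleft hright hbottom htop
  have hφ₀ : φ x = 0 := by rw [← hfφ, hfx, abs_zero]
  have hφ₁ : 1 - φ x = 0 := by rw [← hgφ, hgx, abs_zero]
  linarith

end General

lemma pathSeparates_preimage_val {E : Type*} [TopologicalSpace E] {K A S T : Set E}
    (h : ∀ γ : ℝ → E, ContinuousOn γ (Icc 0 1) → (∀ t ∈ Icc (0 : ℝ) 1, γ t ∈ K) →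
      γ 0 ∈ S → γ 1 ∈ T → ∃ t ∈ Icc (0 : ℝ) 1, γ t ∈ A) :
    PathSeparates (Subtype.val ⁻¹' A : Set K) (Subtype.val ⁻¹' S) (Subtype.val ⁻¹' T) := by
  intro x hx y hy γ
  obtain ⟨t, ht, hA⟩ := h (fun t ↦ γ.extend t)
    (continuous_subtype_val.comp γ.continuous_extend).continuousOn
    (fun t _ ↦ (γ.extend t).2) (by simpa using hx) (by simpa using hy)
  exact ⟨⟨t, ht⟩, by simpa [Path.extend_apply γ ht] using hA⟩

lemma isPreconnected_preimage_val_of_convex {E : Type*} [AddCommGroup E] [Module ℝ E]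
    [TopologicalSpace E] [ContinuousAdd E] [ContinuousSMul ℝ E] {K S : Set E}
    (hK : Convex ℝ K) (hS : Convex ℝ S) : IsPreconnected (Subtype.val ⁻¹' S : Set K) := by
  rw [← Topology.IsInducing.subtypeVal.isPreconnected_image, Subtype.image_preimage_coe]
  exact (hK.inter hS).isPreconnected

lemma convex_unitSquare : Convex ℝ unitSquare := (convex_Icc 0 1).prod (convex_Icc 0 1)

instance : SimplyConnectedSpace unitSquare :=
  have := convex_unitSquare.contractibleSpace ⟨(0, 0), by simp [unitSquare]⟩
  inferInstance

instance : LocallyPathConnectedSpace unitSquare := convex_unitSquare.locallyPathConnectedSpace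

lemma isQuadrilateral_unitSquare :
    IsQuadrilateral (X := unitSquare) (Subtype.val ⁻¹' {p | p.1 = 0})
      (Subtype.val ⁻¹' {p | p.2 = 0}) (Subtype.val ⁻¹' {p | p.1 = 1})
      (Subtype.val ⁻¹' {p | p.2 = 1}) := by
  have hfst (c : ℝ) : IsPreconnected (Subtype.val ⁻¹' {p | p.1 = c} : Set unitSquare) :=
    isPreconnected_preimage_val_of_convex convex_unitSquare
      ((convex_singleton c).linear_preimage (LinearMap.fst ℝ ℝ ℝ))
  have hsnd (c : ℝ) : IsPreconnected (Subtype.val ⁻¹' {p | p.2 = c} : Set unitSquare) :=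
    isPreconnected_preimage_val_of_convex convex_unitSquare
      ((convex_singleton c).linear_preimage (LinearMap.snd ℝ ℝ ℝ))
  exact ⟨hfst 0, hsnd 0, hfst 1, hsnd 1,
    ⟨⟨(0, 0), by simp [unitSquare]⟩, rfl, rfl⟩, ⟨⟨(1, 0), by simp [unitSquare]⟩, rfl, rfl⟩,
    ⟨⟨(1, 1), by simp [unitSquare]⟩, rfl, rfl⟩, ⟨⟨(0, 1), by simp [unitSquare]⟩, rfl, rfl⟩⟩

/-- Lemma 11 of the paper: if `A, B` are closed subsets of the unit square `I` such
that every curve in `I` joining the side `u = 0` to the side `u = 1` meets `A`, and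
every curve in `I` joining the side `v = 0` to the side `v = 1` meets `B`, then
`A ∩ B ≠ ∅`. -/
theorem square_crossing_sets_intersect
    (A B : Set (ℝ × ℝ)) (hA : IsClosed A) (hB : IsClosed B)
    (hAI : A ⊆ unitSquare) (hBI : B ⊆ unitSquare)
    (hAcross : ∀ γ : ℝ → ℝ × ℝ, ContinuousOn γ (Set.Icc 0 1) →
      (∀ t ∈ Set.Icc (0:ℝ) 1, γ t ∈ unitSquare) →
      (γ 0).1 = 0 → (γ 1).1 = 1 → ∃ t ∈ Set.Icc (0:ℝ) 1, γ t ∈ A)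
    (hBcross : ∀ γ : ℝ → ℝ × ℝ, ContinuousOn γ (Set.Icc 0 1) →
      (∀ t ∈ Set.Icc (0:ℝ) 1, γ t ∈ unitSquare) →
      (γ 0).2 = 0 → (γ 1).2 = 1 → ∃ t ∈ Set.Icc (0:ℝ) 1, γ t ∈ B) :
    (A ∩ B).Nonempty := by
  obtain ⟨x, hx⟩ := square_crossing_sets_intersect_general isQuadrilateral_unitSquare
    (hA.preimage continuous_subtype_val) (hB.preimage continuous_subtype_val)
    (pathSeparates_preimage_val hAcross) (pathSeparates_preimage_val hBcross)
  exact ⟨x, hx⟩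
end

section
/- Let n ≥ 3 and consider Euclidean space ℝⁿ with coordinates (x₁,…,xₙ); for x ∈ ℝⁿ write x' = (x₁,x₂) and x'' = (x₃,…,xₙ), and let G = {x ∈ ℝⁿ : x'' = 0} be the coordinate plane of x'. Let D be a linear hyperplane of ℝⁿ (a subspace of dimension n−1) such that D ∩ G = {x ∈ G : x₂ = 0}. Then for any b > 0 there exists c > 0 such that for every x = (x', x'') ∈ D, either |x₂| ≤ b|x₁| or |x''| ≥ c|x'|. -/
open Module

/-!
On `D` the coordinate `x₂` vanishes wherever `x''` does, so it is a linear combination of the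
coordinates of `x''`, whence `|x₂| ≤ C |x''|` by Cauchy–Schwarz. Where `|x₂| > b |x₁|`, the length
`|x'|` is at most `(b⁻¹ + 1) |x₂|`.
-/

theorem exists_eq_sum_mul_of_forall_eq_zero {𝕜 ι E : Type*} [Field 𝕜]
    [AddCommGroup E] [Module 𝕜 E] {s : Finset ι} {L : ι → Dual 𝕜 E} {K : Dual 𝕜 E}
    (h : ∀ x, (∀ i ∈ s, L i x = 0) → K x = 0) :
    ∃ a : s → 𝕜, ∀ x, K x = ∑ i, a i * L i x := by
  have hker : ⨅ i : s, LinearMap.ker (L i) ≤ LinearMap.ker K := fun x hx => by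
    simp only [Submodule.mem_iInf, LinearMap.mem_ker, Subtype.forall] at hx
    exact h x hx
  obtain ⟨a, rfl⟩ :=
    (Submodule.mem_span_range_iff_exists_fun 𝕜).1 (mem_span_of_iInf_ker_le_ker hker)
  exact ⟨a, fun x => by simp only [LinearMap.sum_apply, LinearMap.smul_apply, smul_eq_mul]⟩

theorem exists_abs_le_mul_sqrt_sum_sq {ι E : Type*} [AddCommGroup E] [Module ℝ E]
    {s : Finset ι} {L : ι → Dual ℝ E} {K : Dual ℝ E}
    (h : ∀ x, (∀ i ∈ s, L i x = 0) → K x = 0) :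
    ∃ C : ℝ, 0 < C ∧ ∀ x, |K x| ≤ C * √(∑ i ∈ s, L i x ^ 2) := by
  obtain ⟨a, ha⟩ := exists_eq_sum_mul_of_forall_eq_zero h
  refine ⟨√(∑ i, a i ^ 2) + 1, by positivity, fun x => ?_⟩
  calc |K x| ≤ √((∑ i, a i ^ 2) * ∑ i : s, L i x ^ 2) := by
        rw [ha]
        exact Real.abs_le_sqrt (Finset.sum_mul_sq_le_sq_mul_sq _ _ _)
    _ = √(∑ i, a i ^ 2) * √(∑ i ∈ s, L i x ^ 2) := by
        rw [Real.sqrt_mul (by positivity), Finset.sum_coe_sort s fun i => L i x ^ 2]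
    _ ≤ (√(∑ i, a i ^ 2) + 1) * √(∑ i ∈ s, L i x ^ 2) := by
        gcongr
        exact le_add_of_nonneg_right zero_le_one

theorem sqrt_sq_add_sq_le_of_mul_abs_le {b x y : ℝ} (hb : 0 < b) (h : b * |x| ≤ |y|) :
    √(x ^ 2 + y ^ 2) ≤ (b⁻¹ + 1) * |y| := by
  calc √(x ^ 2 + y ^ 2) ≤ |x| + |y| := by
        rw [← sq_abs x, ← sq_abs y, Real.sqrt_le_left (by positivity)]
        exact pow_add_pow_le (abs_nonneg x) (abs_nonneg y) two_ne_zero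
    _ ≤ b⁻¹ * |y| + |y| := by
        gcongr
        exact (le_inv_mul_iff₀ hb).2 h
    _ = (b⁻¹ + 1) * |y| := by ring

theorem hyperplane_cone_alternative_general {ι E : Type*} [AddCommGroup E] [Module ℝ E]
    (D : Submodule ℝ E) (x₁ : E → ℝ) (x₂ : Dual ℝ E) (s : Finset ι) (L : ι → Dual ℝ E)
    (hD : ∀ x ∈ D, (∀ i ∈ s, L i x = 0) → x₂ x = 0) {b : ℝ} (hb : 0 < b) :
    ∃ c : ℝ, 0 < c ∧ ∀ x ∈ D,
      |x₂ x| ≤ b * |x₁ x| ∨ c * √(x₁ x ^ 2 + x₂ x ^ 2) ≤ √(∑ i ∈ s, L i x ^ 2) := by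
  obtain ⟨C, hC, hbound⟩ := exists_abs_le_mul_sqrt_sum_sq (s := s) (K := x₂.domRestrict D)
    (L := fun i => (L i).domRestrict D) fun x => hD x x.2
  refine ⟨((b⁻¹ + 1) * C)⁻¹, by positivity, fun x hx => ?_⟩
  refine (le_total |x₂ x| (b * |x₁ x|)).imp_right fun hcone => ?_
  rw [inv_mul_le_iff₀ (by positivity)]
  calc √(x₁ x ^ 2 + x₂ x ^ 2) ≤ (b⁻¹ + 1) * |x₂ x| := sqrt_sq_add_sq_le_of_mul_abs_le hb hcone
    _ ≤ (b⁻¹ + 1) * (C * √(∑ i ∈ s, L i x ^ 2)) := by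
        gcongr
        exact hbound ⟨x, hx⟩
    _ = (b⁻¹ + 1) * C * √(∑ i ∈ s, L i x ^ 2) := by ring

/-- Proposition 1 of the paper. In `ℝⁿ` (`n ≥ 3`) with coordinates `(x₁, …, xₙ)`,
write `x' = (x₁, x₂)` and `x'' = (x₃, …, xₙ)`, and let `G = {x : x'' = 0}` be the
coordinate plane of `x'`.  If `D` is a linear hyperplane with `D ∩ G = {x ∈ G : x₂ = 0}`,
then for any `b > 0` there is `c > 0` such that every `x ∈ D` satisfies
`|x₂| ≤ b |x₁|` or `|x''| ≥ c |x'|`. -/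
theorem hyperplane_cone_alternative
    (n : ℕ) (hn : 3 ≤ n)
    (D : Submodule ℝ (EuclideanSpace ℝ (Fin n)))
    (hD : finrank ℝ D = n - 1)
    (hDG : (D : Set (EuclideanSpace ℝ (Fin n))) ∩
        {x | ∀ i : Fin n, 2 ≤ (i : ℕ) → x i = 0} =
      {x | (∀ i : Fin n, 2 ≤ (i : ℕ) → x i = 0) ∧ x ⟨1, by omega⟩ = 0}) :
    ∀ b : ℝ, 0 < b → ∃ c : ℝ, 0 < c ∧ ∀ x ∈ D,
      |x ⟨1, by omega⟩| ≤ b * |x ⟨0, by omega⟩| ∨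
      Real.sqrt (∑ i : Fin n, if 2 ≤ (i : ℕ) then (x i) ^ 2 else 0) ≥
        c * Real.sqrt ((x ⟨0, by omega⟩) ^ 2 + (x ⟨1, by omega⟩) ^ 2) := by
  intro b hb
  simpa [Finset.sum_filter] using hyperplane_cone_alternative_general D (fun x => x ⟨0, by omega⟩)
    (EuclideanSpace.projₗ ⟨1, by omega⟩) {i : Fin n | 2 ≤ (i : ℕ)} EuclideanSpace.projₗ
    (fun x hx hG => (hDG.subset ⟨hx, by simpa using hG⟩).2) hb
end
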